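/- Let d ≥ 2, λ ∈ (0,1], M > 0, A ∈ 𝒜(λ,M), and let χ, Â be the corrector and homogenized matrix, and φ = (φ_kij) a flux corrector (bounded continuous ℤ^d-periodic functions with φ_kij = −φ_ikj and b_ij = ∂_k φ_kij distributionally, where b_ij = a_ij + a_ik ∂_k χ_j − â_ij). Let Ω ⊂ ℝ^d be open, ε > 0, u_ε ∈ C¹(Ω) and u_0 ∈ C²(Ω), and suppose ℒ_ε(u_ε) = ℒ_0(u_0) in Ω in the weak sense, i.e. ∫_Ω ⟨A(x/ε)∇u_ε, ∇ψ⟩ dx = ∫_Ω ⟨Â∇u_0, ∇ψ⟩ dx for every smooth compactly supported ψ on Ω. Then for every smooth compactly supported ψ on Ω, ∫_Ω ⟨A(x/ε)∇(u_ε − u_0 − ε χ_j(x/ε) ∂_j u_0), ∇ψ⟩ dx = ε ∫_Ω φ_kij(x/ε) (∂_k ∂_j u_0) (∂_i ψ) dx − ε ∫_Ω χ_j(x/ε) ⟨A(x/ε) ∇(∂_j u_0), ∇ψ⟩ dx. -/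

import Mathlib

open MeasureTheory Metric Set
open scoped ENNReal NNReal

noncomputable section

/-- The bilinear form `⟨A ξ, η⟩ = ∑ i j, A i j * ξ j * η i`. -/
def bform {d : ℕ} (A : Matrix (Fin d) (Fin d) ℝ) (ξ η : EuclideanSpace ℝ (Fin d)) : ℝ :=
  ∑ i, ∑ j, A i j * ξ j * η i

/-- The point of `ℝᵈ` (as `EuclideanSpace`) with integer coordinates `z`. -/
def perPt {d : ℕ} (z : Fin d → ℤ) : EuclideanSpace ℝ (Fin d) :=
  (WithLp.equiv 2 (Fin d → ℝ)).symm fun i => (z i : ℝ)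

/-- The class `𝒜(λ, M)`: symmetric, elliptic, `ℤᵈ`-periodic, `M`-Lipschitz coefficients. -/
structure MemA (d : ℕ) (lam M : ℝ)
    (A : EuclideanSpace ℝ (Fin d) → Matrix (Fin d) (Fin d) ℝ) : Prop where
  symm : ∀ y, (A y).IsSymm
  ellip_low : ∀ y ξ, lam * ‖ξ‖ ^ 2 ≤ bform (A y) ξ ξ
  ellip_high : ∀ y ξ, bform (A y) ξ ξ ≤ ‖ξ‖ ^ 2
  periodic : ∀ (y : EuclideanSpace ℝ (Fin d)) (z : Fin d → ℤ), A (y + perPt z) = A y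
  lipschitz : ∀ x y i j, |A x i j - A y i j| ≤ M * ‖x - y‖

/-- `u` is a weak solution of `div (A ∇u) = 0` in the open set `Ω`:
`u` is `C¹` on `Ω` and the weak formulation holds against all test functions. -/
def IsWeakSol {d : ℕ} (A : EuclideanSpace ℝ (Fin d) → Matrix (Fin d) (Fin d) ℝ)
    (Ω : Set (EuclideanSpace ℝ (Fin d))) (u : EuclideanSpace ℝ (Fin d) → ℝ) : Prop :=
  ContDiffOn ℝ 1 u Ω ∧
  ∀ ψ : EuclideanSpace ℝ (Fin d) → ℝ, ContDiff ℝ (⊤ : ℕ∞) ψ → HasCompactSupport ψ →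
    tsupport ψ ⊆ Ω →
    ∫ x in Ω, bform (A x) (gradient u x) (gradient ψ x) = 0

/-- The unit cube `[0,1]^d`. -/
def unitCube (d : ℕ) : Set (EuclideanSpace ℝ (Fin d)) := {y | ∀ i, y i ∈ Set.Icc (0 : ℝ) 1}

/-- `χ` is the corrector for the operator with coefficient matrix `A`. -/
def IsCorrector {d : ℕ} (A : EuclideanSpace ℝ (Fin d) → Matrix (Fin d) (Fin d) ℝ)
    (χ : Fin d → EuclideanSpace ℝ (Fin d) → ℝ) : Prop :=
  ∀ j, ContDiff ℝ 1 (χ j) ∧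
    (∀ (y : EuclideanSpace ℝ (Fin d)) (z : Fin d → ℤ), χ j (y + perPt z) = χ j y) ∧
    (∫ y in unitCube d, χ j y) = 0 ∧
    (∀ ψ : EuclideanSpace ℝ (Fin d) → ℝ, ContDiff ℝ (⊤ : ℕ∞) ψ → HasCompactSupport ψ →
      ∫ y, bform (A y) (gradient (χ j) y + EuclideanSpace.single j 1) (gradient ψ y) = 0)

/-- The homogenized matrix `Â`, `â_ij = ∫_{[0,1]^d} (a_ij + a_ik ∂χ_j/∂y_k) dy`. -/
def homMatrix {d : ℕ} (A : EuclideanSpace ℝ (Fin d) → Matrix (Fin d) (Fin d) ℝ)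
    (χ : Fin d → EuclideanSpace ℝ (Fin d) → ℝ) : Matrix (Fin d) (Fin d) ℝ :=
  Matrix.of fun i j => ∫ y in unitCube d, (A y i j + ∑ k, A y i k * gradient (χ j) y k)

/-- The ellipsoid `E_r = {x : ⟨Â⁻¹ x, x⟩ < r²}` associated with a homogenized matrix `Â`. -/
def ellipsoid {d : ℕ} (Ahat : Matrix (Fin d) (Fin d) ℝ) (r : ℝ) :
    Set (EuclideanSpace ℝ (Fin d)) := {x | bform Ahat⁻¹ x x < r ^ 2}

/-- The class `ℱ(N)` of normalized solutions of constant-coefficient equations in `B₁`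
satisfying an `N`-doubling condition. -/
def MemF (d : ℕ) (lam N : ℝ) (u : EuclideanSpace ℝ (Fin d) → ℝ) : Prop :=
  (∃ A : Matrix (Fin d) (Fin d) ℝ, A.IsSymm ∧
      (∀ ξ : EuclideanSpace ℝ (Fin d), lam * ‖ξ‖ ^ 2 ≤ bform A ξ ξ ∧ bform A ξ ξ ≤ ‖ξ‖ ^ 2) ∧
      IsWeakSol (fun _ => A) (ball 0 1) u) ∧
  (⨍ x in ball (0 : EuclideanSpace ℝ (Fin d)) 1, (u x) ^ 2) = 1 ∧
  (⨍ x in ball (0 : EuclideanSpace ℝ (Fin d)) 1, (u x) ^ 2) ≤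
    N * ⨍ x in ball (0 : EuclideanSpace ℝ (Fin d)) (1 / 2), (u x) ^ 2

/-- `w` is harmonic on `Ω`: it is `C²` there and its Laplacian vanishes. -/
def IsHarmonicOn {d : ℕ} (w : EuclideanSpace ℝ (Fin d) → ℝ)
    (Ω : Set (EuclideanSpace ℝ (Fin d))) : Prop :=
  ContDiffOn ℝ 2 w Ω ∧ ∀ x ∈ Ω, (∑ i, gradient (fun y => gradient w y i) x i) = 0

/-- `F_ε(y, r) = ℋ^{d-1}(Z(u) ∩ B(y,r)) / r^{d-1}` where `Z(u)` is the nodal set of `u` in `B₂`. -/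
def nodalRatio {d : ℕ} (u : EuclideanSpace ℝ (Fin d) → ℝ)
    (y : EuclideanSpace ℝ (Fin d)) (r : ℝ) : ℝ≥0∞ :=
  μH[(d : ℝ) - 1] ({x ∈ ball (0 : EuclideanSpace ℝ (Fin d)) 2 | u x = 0} ∩ ball y r) /
    ENNReal.ofReal (r ^ (d - 1))

/-!
Write `w = u_ε - u₀ - ε χ_j(x/ε) ∂_j u₀`. Differentiating the product gives
`A(x/ε)∇w = A(x/ε)∇u_ε - Â∇u₀ - b(x/ε)∇u₀ - ε χ_j(x/ε) A(x/ε)∇(∂_j u₀)`, and the first two terms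
cancel when tested against `∇ψ`. In the third, `b_ij(x/ε)` is the weak divergence of
`ε φ_·ij(x/ε)`; the function `∂_j u₀ ∂_iψ` it multiplies is only `C¹`, but mollification shows that
such functions are admissible in the definition of weak divergence. The derivative then falls on
`∂_j u₀`, which is the asserted term, or on `∂_iψ`, where `φ_kij ∂_k∂_iψ = 0` since `φ` is
skew-symmetric and the Hessian symmetric in `(k, i)`.
-/

section Mollification

open Filter
open scoped Topology Convolution Pointwise

variable {E W G H : Type*} [NormedAddCommGroup E] [NormedSpace ℝ E] [FiniteDimensional ℝ E]
  [MeasurableSpace E] [BorelSpace E] {μ : Measure E} [μ.IsAddHaarMeasure]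
  [NormedAddCommGroup W] [NormedSpace ℝ W] [NormedAddCommGroup G] [NormedSpace ℝ G]
  [NormedAddCommGroup H] [NormedSpace ℝ H]

theorem norm_normed_convolution_le [CompleteSpace G] (ρ : ContDiffBump (0 : E)) {g : E → G} {C : ℝ}
    (hg : AEStronglyMeasurable g μ) (hC : ∀ x, ‖g x‖ ≤ C) (y : E) :
    ‖(ρ.normed μ ⋆[.lsmul ℝ ℝ, μ] g) y‖ ≤ 3 * C := by
  have oscillation : ∀ x ∈ ball y ρ.rOut, dist (g x) (g y) ≤ 2 * C := fun x _ ↦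
    (dist_le_norm_add_norm _ _).trans (by linarith [hC x, hC y])
  have close := ρ.dist_normed_convolution_le hg oscillation
  rw [dist_eq_norm] at close
  linarith [norm_le_norm_sub_add ((ρ.normed μ ⋆[.lsmul ℝ ℝ, μ] g) y) (g y), hC y]

theorem normed_convolution_eq_zero_of_notMem (ρ : ContDiffBump (0 : E)) {g : E → G} {r : ℝ}
    (hr : ρ.rOut ≤ r) {y : E} (hy : y ∉ closedBall 0 r + tsupport g) :
    (ρ.normed μ ⋆[.lsmul ℝ ℝ, μ] g) y = 0 := by
  contrapose! hy
  have hmem := support_convolution_subset _ (Function.mem_support.2 hy)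
  rw [ρ.support_normed_eq] at hmem
  exact add_subset_add ((ball_subset_ball hr).trans ball_subset_closedBall)
    (subset_tsupport g) hmem

theorem fderiv_normed_convolution (ρ : ContDiffBump (0 : E)) {g : E → G} (hg : ContDiff ℝ 1 g)
    (hgs : HasCompactSupport g) :
    fderiv ℝ (ρ.normed μ ⋆[.lsmul ℝ ℝ, μ] g) =
      ρ.normed μ ⋆[.lsmul ℝ ℝ, μ] fderiv ℝ g := by
  have precompR_lsmul : (ContinuousLinearMap.lsmul ℝ ℝ : ℝ →L[ℝ] G →L[ℝ] G).precompR E =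
      .lsmul ℝ ℝ := by
    ext; rfl
  ext1 x
  rw [(hgs.hasFDerivAt_convolution_right _ ρ.continuous_normed.locallyIntegrable hg x).fderiv,
    precompR_lsmul]

theorem tendsto_integral_normed_convolution [CompleteSpace G] {ι : Type*} {l : Filter ι}
    [l.IsCountablyGenerated] (L : W →L[ℝ] G →L[ℝ] H) {c : E → W} {g : E → G}
    (hc : LocallyIntegrable c μ) (hg : Continuous g) (hgs : HasCompactSupport g)
    {ρ : ι → ContDiffBump (0 : E)} (hρ : Tendsto (fun n ↦ (ρ n).rOut) l (𝓝 0)) :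
    Tendsto (fun n ↦ ∫ y, L (c y) (((ρ n).normed μ ⋆[.lsmul ℝ ℝ, μ] g) y) ∂μ) l
      (𝓝 (∫ y, L (c y) (g y) ∂μ)) := by
  obtain ⟨C, hC⟩ := hg.bounded_above_of_compact_support hgs
  let K : Set E := closedBall 0 1 + tsupport g
  have hK : IsCompact K := (isCompact_closedBall 0 1).add hgs
  have continuous_conv (n : ι) : Continuous ((ρ n).normed μ ⋆[.lsmul ℝ ℝ, μ] g) :=
    hgs.continuous_convolution_right _ (ρ n).continuous_normed.locallyIntegrable hg
  refine tendsto_integral_filter_of_dominated_convergence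
    (K.indicator fun y ↦ ‖L‖ * ‖c y‖ * (3 * C)) ?_ ?_ ?_ ?_
  · exact .of_forall fun n ↦ L.aestronglyMeasurable_comp₂ hc.aestronglyMeasurable
      (continuous_conv n).aestronglyMeasurable
  · filter_upwards [hρ.eventually_le_const zero_lt_one] with n hn
    refine .of_forall fun y ↦ ?_
    by_cases hy : y ∈ K
    · rw [indicator_of_mem hy]
      exact L.le_of_opNorm₂_le_of_le le_rfl le_rfl
        (norm_normed_convolution_le (ρ n) hg.aestronglyMeasurable hC y)
    · rw [indicator_of_notMem hy, normed_convolution_eq_zero_of_notMem (ρ n) hn hy, map_zero,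
        norm_zero]
  · rw [integrable_indicator_iff hK.measurableSet]
    exact ((hc.integrableOn_isCompact hK).norm.const_mul _).mul_const _
  · exact .of_forall fun y ↦ ((L (c y)).continuous.tendsto _).comp
      (ContDiffBump.convolution_tendsto_right_of_continuous hρ hg y)

end Mollification

theorem contDiff_mul_of_tsupport_subset {E : Type*} [NormedAddCommGroup E] [NormedSpace ℝ E]
    {n : WithTop ℕ∞} {Ω : Set E} (hΩ : IsOpen Ω) {f g : E → ℝ}
    (hf : ContDiffOn ℝ n f Ω) (hg : ContDiff ℝ n g) (hgΩ : tsupport g ⊆ Ω) :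
    ContDiff ℝ n (fun x ↦ f x * g x) :=
  contMDiff_iff_contDiff.1 <| contMDiff_of_tsupport fun _ hx ↦ contMDiffAt_iff_contDiffAt.2 <|
    (hf.contDiffAt (hΩ.mem_nhds (hgΩ (tsupport_mul_subset_right hx)))).mul hg.contDiffAt

section WeakDivergence

open Filter
open scoped Topology ContDiff Convolution

variable {E : Type*} [NormedAddCommGroup E] [NormedSpace ℝ E] [MeasurableSpace E]

/-- `b` is the distributional divergence of the vector field `F` with respect to `μ`. The pairing
`⟨F, ∇ψ⟩` is written as `fderiv ℝ ψ y (F y)`, so that no inner product is needed. -/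
def HasWeakDiv (μ : Measure E) (F : E → E) (b : E → ℝ) : Prop :=
  ∀ ψ : E → ℝ, ContDiff ℝ ∞ ψ → HasCompactSupport ψ →
    ∫ y, b y * ψ y ∂μ = -∫ y, fderiv ℝ ψ y (F y) ∂μ

variable [FiniteDimensional ℝ E] [BorelSpace E] {μ : Measure E} [μ.IsAddHaarMeasure]
  {F : E → E} {b : E → ℝ}

theorem HasWeakDiv.comp_inv_smul (h : HasWeakDiv μ F b) {ε : ℝ} (hε : ε ≠ 0) :
    HasWeakDiv μ (fun x ↦ ε • F (ε⁻¹ • x)) (fun x ↦ b (ε⁻¹ • x)) := by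
  intro ψ hψ hψs
  have unscale (x : E) : ε • ε⁻¹ • x = x := smul_inv_smul₀ hε x
  have hdiv := h (fun y ↦ ψ (ε • y)) (hψ.comp (contDiff_const_smul ε))
    (hψs.comp_homeomorph (Homeomorph.smulOfNeZero ε hε))
  have lhs := μ.integral_comp_inv_smul (fun y ↦ b y * ψ (ε • y)) ε
  have rhs := μ.integral_comp_inv_smul (fun y ↦ fderiv ℝ (fun z ↦ ψ (ε • z)) y (F y)) ε
  simp only [fderiv_comp_smul, smul_apply, unscale] at hdiv lhs rhs
  simp only [map_smul, lhs, rhs, hdiv, smul_neg]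

theorem HasWeakDiv.integral_mul_eq_of_contDiff_one (h : HasWeakDiv μ F b)
    (hb : LocallyIntegrable b μ) (hF : LocallyIntegrable F μ) {g : E → ℝ} (hg : ContDiff ℝ 1 g)
    (hgs : HasCompactSupport g) :
    ∫ y, b y * g y ∂μ = -∫ y, fderiv ℝ g y (F y) ∂μ := by
  let ρ (n : ℕ) : ContDiffBump (0 : E) :=
    ⟨1 / (n + 1 + 1), 1 / (n + 1), by positivity, by gcongr; linarith⟩
  have hρ : Tendsto (fun n ↦ (ρ n).rOut) atTop (𝓝 0) := tendsto_one_div_add_atTop_nhds_zero_nat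
  have lhs_limit := tendsto_integral_normed_convolution (.mul ℝ ℝ) hb hg.continuous hgs hρ
  have rhs_limit := tendsto_integral_normed_convolution
    (ContinuousLinearMap.id ℝ (E →L[ℝ] ℝ)).flip hF (hg.continuous_fderiv one_ne_zero)
    (hgs.fderiv ℝ) hρ
  refine tendsto_nhds_unique lhs_limit (rhs_limit.neg.congr fun n ↦ ?_)
  have smooth : ContDiff ℝ ∞ ((ρ n).normed μ ⋆[.lsmul ℝ ℝ, μ] g) :=
    (ρ n).hasCompactSupport_normed.contDiff_convolution_left _ (ρ n).contDiff_normed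
      hg.continuous.locallyIntegrable
  have test := h _ smooth ((ρ n).hasCompactSupport_normed.convolution _ hgs)
  rw [fderiv_normed_convolution (ρ n) hg hgs] at test
  exact test.symm

theorem HasWeakDiv.setIntegral_mul_mul (h : HasWeakDiv μ F b) (hb : LocallyIntegrable b μ)
    (hF : LocallyIntegrable F μ) {Ω : Set E} (hΩ : IsOpen Ω) {f g : E → ℝ}
    (hf : ContDiffOn ℝ 1 f Ω) (hg : ContDiff ℝ 1 g) (hgs : HasCompactSupport g)
    (hgΩ : tsupport g ⊆ Ω) :
    ∫ x in Ω, b x * f x * g x ∂μ =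
      -∫ x in Ω, (fderiv ℝ f x (F x) * g x + f x * fderiv ℝ g x (F x)) ∂μ := by
  have hfgΩ : tsupport (fun x ↦ f x * g x) ⊆ Ω := tsupport_mul_subset_right.trans hgΩ
  have product_rule : ∀ x ∈ Ω, fderiv ℝ (fun x ↦ f x * g x) x (F x) =
      fderiv ℝ f x (F x) * g x + f x * fderiv ℝ g x (F x) := fun x hx ↦ by
    have hfx := (hf.contDiffAt (hΩ.mem_nhds hx)).differentiableAt one_ne_zero
    rw [fderiv_fun_mul hfx (hg.differentiable one_ne_zero x)]
    simp only [add_apply, smul_apply, smul_eq_mul]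
    ring
  calc ∫ x in Ω, b x * f x * g x ∂μ
      = ∫ x, b x * (f x * g x) ∂μ := by
        simp only [mul_assoc]
        refine setIntegral_eq_integral_of_forall_compl_eq_zero fun x hx ↦ ?_
        rw [image_eq_zero_of_notMem_tsupport fun h ↦ hx (hgΩ h), mul_zero, mul_zero]
    _ = -∫ x, fderiv ℝ (fun x ↦ f x * g x) x (F x) ∂μ :=
        h.integral_mul_eq_of_contDiff_one hb hF (contDiff_mul_of_tsupport_subset hΩ hf hg hgΩ)
          hgs.mul_left
    _ = -∫ x in Ω, fderiv ℝ (fun x ↦ f x * g x) x (F x) ∂μ := by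
        rw [setIntegral_eq_integral_of_forall_compl_eq_zero fun x hx ↦ ?_]
        rw [fderiv_of_notMem_tsupport ℝ fun h ↦ hx (hfgΩ h), zero_apply]
    _ = _ := by rw [setIntegral_congr_fun hΩ.measurableSet product_rule]

end WeakDivergence

section Gradient

variable {E : Type*} [NormedAddCommGroup E] [InnerProductSpace ℝ E] [CompleteSpace E]
  {ι : Type*} [Fintype ι]

theorem continuousOn_gradient {Ω : Set E} (hΩ : IsOpen Ω) {u : E → ℝ} (hu : ContDiffOn ℝ 1 u Ω) :
    ContinuousOn (gradient u) Ω :=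
  (InnerProductSpace.toDual ℝ E).symm.continuous.comp_continuousOn
    (hu.continuousOn_fderiv_of_isOpen hΩ le_rfl)

theorem gradient_of_notMem_tsupport {u : E → ℝ} {x : E} (hx : x ∉ tsupport u) :
    gradient u x = 0 := by
  rw [gradient, fderiv_of_notMem_tsupport ℝ hx, map_zero]

theorem gradient_twoScale_error {v u : E → ℝ} {χ g : ι → E → ℝ} {ε : ℝ} (hε : ε ≠ 0) {x : E}
    (hv : DifferentiableAt ℝ v x) (hu : DifferentiableAt ℝ u x)
    (hχ : ∀ j, DifferentiableAt ℝ (χ j) (ε⁻¹ • x)) (hg : ∀ j, DifferentiableAt ℝ (g j) x) :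
    gradient (fun y ↦ v y - u y - ε * ∑ j, χ j (ε⁻¹ • y) * g j y) x =
      gradient v x - gradient u x - ∑ j, g j x • gradient (χ j) (ε⁻¹ • x) -
        ε • ∑ j, χ j (ε⁻¹ • x) • gradient (g j) x := by
  have hχε (j : ι) : HasFDerivAt (fun y ↦ χ j (ε⁻¹ • y)) (ε⁻¹ • fderiv ℝ (χ j) (ε⁻¹ • x)) x := by
    rw [← fderiv_comp_smul]
    exact ((hχ j).comp x (differentiableAt_id.const_smul ε⁻¹)).hasFDerivAt
  have error_fderiv := (hv.hasFDerivAt.fun_sub hu.hasFDerivAt).fun_sub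
    ((HasFDerivAt.fun_sum (u := Finset.univ) fun j _ ↦
      (hχε j).fun_mul (hg j).hasFDerivAt).const_mul ε)
  apply (InnerProductSpace.toDual ℝ E).injective
  rw [toDual_gradient, error_fderiv.fderiv]
  simp only [map_sub, map_sum, map_smulₛₗ, toDual_gradient, RCLike.conj_to_real,
    Finset.sum_add_distrib, smul_add, Finset.smul_sum, smul_comm _ ε⁻¹, inv_smul_smul₀ hε]
  abel

variable {Ω : Set (EuclideanSpace ℝ ι)} {u : EuclideanSpace ℝ ι → ℝ}

theorem fderiv_apply_eq_sum_mul_gradient (u : EuclideanSpace ℝ ι → ℝ) (x v : EuclideanSpace ℝ ι) :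
    fderiv ℝ u x v = ∑ k, v k * gradient u x k := by
  simp only [← inner_gradient_left, PiLp.inner_apply, RCLike.inner_apply, RCLike.conj_to_real]

theorem gradient_apply_eq_fderiv [DecidableEq ι] (u : EuclideanSpace ℝ ι → ℝ)
    (x : EuclideanSpace ℝ ι) (i : ι) :
    gradient u x i = fderiv ℝ u x (EuclideanSpace.single i 1) := by
  simp [fderiv_apply_eq_sum_mul_gradient]

theorem contDiffOn_gradient_apply {m n : WithTop ℕ∞} (hΩ : IsOpen Ω) (hu : ContDiffOn ℝ n u Ω)
    (hmn : m + 1 ≤ n) (i : ι) : ContDiffOn ℝ m (fun x ↦ gradient u x i) Ω := by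
  classical
  simp only [gradient_apply_eq_fderiv]
  exact (hu.fderiv_of_isOpen hΩ hmn).clm_apply contDiffOn_const

theorem contDiff_gradient_apply {m n : WithTop ℕ∞} (hu : ContDiff ℝ n u) (hmn : m + 1 ≤ n)
    (i : ι) : ContDiff ℝ m (fun x ↦ gradient u x i) :=
  contDiffOn_univ.1 (contDiffOn_gradient_apply isOpen_univ hu.contDiffOn hmn i)

theorem tsupport_gradient_apply_subset (u : EuclideanSpace ℝ ι → ℝ) (i : ι) :
    tsupport (fun x ↦ gradient u x i) ⊆ tsupport u := by
  classical
  simpa only [gradient_apply_eq_fderiv] using tsupport_fderiv_apply_subset ℝ _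

theorem gradient_gradient_comm (hu : ContDiff ℝ 2 u) (x : EuclideanSpace ℝ ι) (i k : ι) :
    gradient (fun y ↦ gradient u y i) x k = gradient (fun y ↦ gradient u y k) x i := by
  classical
  have hdiff : DifferentiableAt ℝ (fderiv ℝ u) x :=
    (hu.fderiv_right (m := 1) one_add_one_eq_two.le).differentiable one_ne_zero x
  have second_derivative (v w : EuclideanSpace ℝ ι) :
      fderiv ℝ (fun y ↦ fderiv ℝ u y v) x w = fderiv ℝ (fderiv ℝ u) x w v := by
    simp [fderiv_clm_apply hdiff (differentiableAt_const v)]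
  simp only [gradient_apply_eq_fderiv, second_derivative]
  exact hu.contDiffAt.isSymmSndFDerivAt (by simp) _ _

theorem sum_fderiv_gradient_apply_eq_zero_of_skew (hu : ContDiff ℝ 2 u) (x : EuclideanSpace ℝ ι)
    {F : ι → EuclideanSpace ℝ ι} (hF : ∀ i k, F i k = -F k i) :
    ∑ i, fderiv ℝ (fun y ↦ gradient u y i) x (F i) = 0 := by
  simp only [fderiv_apply_eq_sum_mul_gradient]
  refine self_eq_neg.1 ?_
  conv_lhs => rw [Finset.sum_comm]
  simp only [← Finset.sum_neg_distrib]
  refine Finset.sum_congr rfl fun i _ ↦ Finset.sum_congr rfl fun k _ ↦ ?_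
  rw [hF k i, gradient_gradient_comm hu x k i, neg_mul]

end Gradient

section BilinearForm

variable {d : ℕ}

theorem bform_eq_inner (A : Matrix (Fin d) (Fin d) ℝ) (ξ η : EuclideanSpace ℝ (Fin d)) :
    bform A ξ η = inner ℝ η (A.toEuclideanLin ξ) := by
  simp [bform, PiLp.inner_apply, Matrix.mulVec, dotProduct, Finset.sum_mul]

theorem bform_sub_left (A : Matrix (Fin d) (Fin d) ℝ) (ξ ζ η : EuclideanSpace ℝ (Fin d)) :
    bform A (ξ - ζ) η = bform A ξ η - bform A ζ η := by
  simp only [bform_eq_inner, map_sub, inner_sub_right]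

theorem bform_smul_left (A : Matrix (Fin d) (Fin d) ℝ) (c : ℝ) (ξ η : EuclideanSpace ℝ (Fin d)) :
    bform A (c • ξ) η = c * bform A ξ η := by
  simp only [bform_eq_inner, map_smul, inner_smul_right]

theorem bform_sum_left {ι : Type*} (s : Finset ι) (A : Matrix (Fin d) (Fin d) ℝ)
    (ξ : ι → EuclideanSpace ℝ (Fin d)) (η : EuclideanSpace ℝ (Fin d)) :
    bform A (∑ j ∈ s, ξ j) η = ∑ j ∈ s, bform A (ξ j) η := by
  simp only [bform_eq_inner, map_sum, inner_sum]

theorem continuousOn_bform {X : Type*} [TopologicalSpace X] {s : Set X}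
    {A : X → Matrix (Fin d) (Fin d) ℝ} {ξ η : X → EuclideanSpace ℝ (Fin d)}
    (hA : ContinuousOn A s) (hξ : ContinuousOn ξ s) (hη : ContinuousOn η s) :
    ContinuousOn (fun x ↦ bform (A x) (ξ x) (η x)) s := by
  have hAij (i j : Fin d) : ContinuousOn (fun x ↦ A x i j) s :=
    (continuous_id.matrix_elem i j).comp_continuousOn hA
  unfold bform
  fun_prop

theorem bform_flux_defect {A Ahat B : Matrix (Fin d) (Fin d) ℝ}
    {X : Fin d → EuclideanSpace ℝ (Fin d)}
    (hB : ∀ i j, B i j = A i j + ∑ k, A i k * X j k - Ahat i j) (ξ η : EuclideanSpace ℝ (Fin d)) :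
    bform B ξ η = bform A ξ η + ∑ j, ξ j * bform A (X j) η - bform Ahat ξ η := by
  have corrector_sum : ∑ j, ξ j * bform A (X j) η =
      ∑ i, ∑ j, (∑ k, A i k * X j k) * ξ j * η i := by
    simp only [bform, Finset.mul_sum, Finset.sum_mul]
    rw [Finset.sum_comm]
    exact Finset.sum_congr rfl fun i _ ↦ Finset.sum_congr rfl fun j _ ↦
      Finset.sum_congr rfl fun k _ ↦ by ring
  rw [corrector_sum]
  simp only [bform, hB, ← Finset.sum_add_distrib, ← Finset.sum_sub_distrib]
  exact Finset.sum_congr rfl fun i _ ↦ Finset.sum_congr rfl fun j _ ↦ by ring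

end BilinearForm

section Integrability

theorem integrableOn_of_continuousOn_of_eq_zero_off_compact {X : Type*} [TopologicalSpace X]
    [T2Space X] [MeasurableSpace X] [OpensMeasurableSpace X] {μ : Measure X}
    [IsFiniteMeasureOnCompacts μ] {G : Type*} [NormedAddCommGroup G] {f : X → G} {K Ω : Set X}
    (hf : ContinuousOn f Ω) (hΩ : MeasurableSet Ω) (hK : IsCompact K) (hKΩ : K ⊆ Ω)
    (hf0 : ∀ x ∉ K, f x = 0) : IntegrableOn f Ω μ :=
  ((hf.mono hKΩ).integrableOn_compact hK).of_forall_sdiff_eq_zero hΩ fun x hx ↦ hf0 x hx.2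

theorem integrableOn_mul_fderiv_apply {E : Type*} [NormedAddCommGroup E] [NormedSpace ℝ E]
    [MeasurableSpace E] [OpensMeasurableSpace E] {μ : Measure E} [IsFiniteMeasureOnCompacts μ]
    {Ω : Set E} (hΩ : MeasurableSet Ω) {f g : E → ℝ} {F : E → E} (hf : ContinuousOn f Ω)
    (hF : ContinuousOn F Ω) (hg : ContDiff ℝ 1 g) (hgs : HasCompactSupport g)
    (hgΩ : tsupport g ⊆ Ω) : IntegrableOn (fun x ↦ f x * fderiv ℝ g x (F x)) Ω μ :=
  integrableOn_of_continuousOn_of_eq_zero_off_compact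
    (hf.mul ((hg.continuous_fderiv one_ne_zero).continuousOn.clm_apply hF)) hΩ hgs hgΩ
    fun x hx ↦ by simp [fderiv_of_notMem_tsupport ℝ hx]

theorem integrableOn_bform_gradient {d : ℕ} {Ω : Set (EuclideanSpace ℝ (Fin d))}
    (hΩ : MeasurableSet Ω)
    {A : EuclideanSpace ℝ (Fin d) → Matrix (Fin d) (Fin d) ℝ}
    {ξ : EuclideanSpace ℝ (Fin d) → EuclideanSpace ℝ (Fin d)} {ψ : EuclideanSpace ℝ (Fin d) → ℝ}
    (hA : ContinuousOn A Ω) (hξ : ContinuousOn ξ Ω) (hψ : ContDiff ℝ 1 ψ)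
    (hψs : HasCompactSupport ψ) (hψΩ : tsupport ψ ⊆ Ω) :
    IntegrableOn (fun x ↦ bform (A x) (ξ x) (gradient ψ x)) Ω :=
  integrableOn_of_continuousOn_of_eq_zero_off_compact
    (continuousOn_bform hA hξ
      ((continuousOn_gradient isOpen_univ hψ.contDiffOn).mono (subset_univ Ω)))
    hΩ hψs hψΩ fun x hx ↦ by simp [gradient_of_notMem_tsupport hx, bform]

theorem integral_sum_sum {X G ι κ : Type*} [Fintype ι] [Fintype κ] [MeasurableSpace X]
    {μ : Measure X} [NormedAddCommGroup G] [NormedSpace ℝ G] {f : ι → κ → X → G}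
    (hf : ∀ i j, Integrable (f i j) μ) :
    ∫ x, ∑ i, ∑ j, f i j x ∂μ = ∑ i, ∑ j, ∫ x, f i j x ∂μ := by
  rw [integral_finsetSum _ fun i _ ↦ integrable_finsetSum _ fun j _ ↦ hf i j]
  simp only [integral_finsetSum _ fun j _ ↦ hf _ j]

end Integrability

section Flux

theorem setIntegral_sum_mul_gradient_of_skew {ι κ : Type*} [Fintype ι] [Fintype κ]
    {b : ι → κ → EuclideanSpace ℝ ι → ℝ} {F : ι → κ → EuclideanSpace ℝ ι → EuclideanSpace ℝ ι}
    (hb : ∀ i j, Continuous (b i j)) (hF : ∀ i j, Continuous (F i j))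
    (hdiv : ∀ i j, HasWeakDiv volume (F i j) (b i j)) (hskew : ∀ i k j x, F i j x k = -F k j x i)
    {Ω : Set (EuclideanSpace ℝ ι)} (hΩ : IsOpen Ω) {V : κ → EuclideanSpace ℝ ι → ℝ}
    (hV : ∀ j, ContDiffOn ℝ 1 (V j) Ω) {ψ : EuclideanSpace ℝ ι → ℝ} (hψ : ContDiff ℝ 2 ψ)
    (hψs : HasCompactSupport ψ) (hψΩ : tsupport ψ ⊆ Ω) :
    ∫ x in Ω, ∑ i, ∑ j, b i j x * V j x * gradient ψ x i =
      -∫ x in Ω, ∑ i, ∑ j, fderiv ℝ (V j) x (F i j x) * gradient ψ x i := by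
  classical
  let P (i : ι) (x : EuclideanSpace ℝ ι) : ℝ := gradient ψ x i
  have hP (i : ι) : ContDiff ℝ 1 (P i) := contDiff_gradient_apply hψ one_add_one_eq_two.le i
  have hPψ (i : ι) : tsupport (P i) ⊆ tsupport ψ := tsupport_gradient_apply_subset ψ i
  have hPs (i : ι) : HasCompactSupport (P i) := hψs.of_isClosed_subset (isClosed_tsupport _) (hPψ i)
  have integrable_mul_P (i : ι) {f : EuclideanSpace ℝ ι → ℝ} (hf : ContinuousOn f Ω) :
      IntegrableOn (fun x ↦ f x * P i x) Ω := by
    simpa only [P, gradient_apply_eq_fderiv] using integrableOn_mul_fderiv_apply hΩ.measurableSet hf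
      continuousOn_const (hψ.of_le one_le_two) hψs hψΩ
  have integrable_product_rule (i : ι) (j : κ) : IntegrableOn (fun x ↦
      fderiv ℝ (V j) x (F i j x) * P i x + V j x * fderiv ℝ (P i) x (F i j x)) Ω :=
    (integrable_mul_P i (((hV j).continuousOn_fderiv_of_isOpen hΩ le_rfl).clm_apply
      (hF i j).continuousOn)).add (integrableOn_mul_fderiv_apply hΩ.measurableSet
        (hV j).continuousOn (hF i j).continuousOn (hP i) (hPs i) ((hPψ i).trans hψΩ))
  have second_order_sum (x : EuclideanSpace ℝ ι) :
      ∑ i, ∑ j, V j x * fderiv ℝ (P i) x (F i j x) = 0 := by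
    rw [Finset.sum_comm]
    refine Finset.sum_eq_zero fun j _ ↦ ?_
    rw [← Finset.mul_sum,
      sum_fderiv_gradient_apply_eq_zero_of_skew hψ x fun i k ↦ hskew i k j x, mul_zero]
  calc ∫ x in Ω, ∑ i, ∑ j, b i j x * V j x * P i x
      = ∑ i, ∑ j, ∫ x in Ω, b i j x * V j x * P i x :=
        integral_sum_sum fun i j ↦
          integrable_mul_P i ((hb i j).continuousOn.mul (hV j).continuousOn)
    _ = ∑ i, ∑ j, -∫ x in Ω,
          (fderiv ℝ (V j) x (F i j x) * P i x + V j x * fderiv ℝ (P i) x (F i j x)) :=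
        Finset.sum_congr rfl fun i _ ↦ Finset.sum_congr rfl fun j _ ↦
          (hdiv i j).setIntegral_mul_mul (hb i j).locallyIntegrable (hF i j).locallyIntegrable hΩ
            (hV j) (hP i) (hPs i) ((hPψ i).trans hψΩ)
    _ = -∫ x in Ω, ∑ i, ∑ j, fderiv ℝ (V j) x (F i j x) * P i x := by
        simp only [Finset.sum_neg_distrib, ← integral_sum_sum integrable_product_rule,
          Finset.sum_add_distrib, second_order_sum, add_zero]

theorem hasWeakDiv_toLp {ι : Type*} [Fintype ι] {b : EuclideanSpace ℝ ι → ℝ}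
    {φ : ι → EuclideanSpace ℝ ι → ℝ} (hφ : ∀ k, Continuous (φ k))
    (hdiv : ∀ ψ : EuclideanSpace ℝ ι → ℝ, ContDiff ℝ (⊤ : ℕ∞) ψ → HasCompactSupport ψ →
      ∫ y, b y * ψ y = -∑ k, ∫ y, φ k y * gradient ψ y k) :
    HasWeakDiv volume (fun y ↦ WithLp.toLp 2 fun k ↦ φ k y) b := by
  intro ψ hψ hψs
  have integrable_term (k : ι) : Integrable fun y ↦ φ k y * gradient ψ y k :=
    ((hφ k).mul (contDiff_gradient_apply (m := 0) hψ (by simp) k).continuous)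
      |>.integrable_of_hasCompactSupport (hψs.of_isClosed_subset (isClosed_tsupport _)
        (tsupport_mul_subset_right.trans (tsupport_gradient_apply_subset ψ k)))
  simp only [hdiv ψ hψ hψs, fderiv_apply_eq_sum_mul_gradient,
    integral_finsetSum _ fun k _ ↦ integrable_term k]

theorem setIntegral_bform_rescaled_flux {d : ℕ}
    {b : Fin d → Fin d → EuclideanSpace ℝ (Fin d) → ℝ}
    {φ : Fin d → Fin d → Fin d → EuclideanSpace ℝ (Fin d) → ℝ}
    (hb : ∀ i j, Continuous (b i j)) (hφ : ∀ k i j, Continuous (φ k i j))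
    (hskew : ∀ k i j y, φ k i j y = -φ i k j y)
    (hdiv : ∀ i j, HasWeakDiv volume (fun y ↦ WithLp.toLp 2 fun k ↦ φ k i j y) (b i j))
    {ε : ℝ} (hε : ε ≠ 0) {Ω : Set (EuclideanSpace ℝ (Fin d))} (hΩ : IsOpen Ω)
    {V : EuclideanSpace ℝ (Fin d) → EuclideanSpace ℝ (Fin d)}
    (hV : ∀ j, ContDiffOn ℝ 1 (fun x ↦ V x j) Ω) {ψ : EuclideanSpace ℝ (Fin d) → ℝ}
    (hψ : ContDiff ℝ 2 ψ) (hψs : HasCompactSupport ψ) (hψΩ : tsupport ψ ⊆ Ω) :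
    ∫ x in Ω, bform (.of fun i j ↦ b i j (ε⁻¹ • x)) (V x) (gradient ψ x) =
      -(ε * ∫ x in Ω, ∑ i, ∑ j, ∑ k,
        φ k i j (ε⁻¹ • x) * gradient (fun y ↦ V y j) x k * gradient ψ x i) := by
  have rescale : Continuous fun x : EuclideanSpace ℝ (Fin d) ↦ ε⁻¹ • x := continuous_const_smul _
  have hF (i j : Fin d) : Continuous fun x : EuclideanSpace ℝ (Fin d) ↦
      ε • WithLp.toLp 2 fun k ↦ φ k i j (ε⁻¹ • x) := by
    fun_prop
  have flux := setIntegral_sum_mul_gradient_of_skew (fun i j ↦ (hb i j).comp rescale) hF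
    (fun i j ↦ (hdiv i j).comp_inv_smul hε)
    (fun i k j x ↦ by simp [hskew k i j]) hΩ hV hψ hψs hψΩ
  simp only [bform, Matrix.of_apply]
  refine flux.trans ?_
  rw [← integral_const_mul]
  simp only [map_smul, fderiv_apply_eq_sum_mul_gradient, smul_eq_mul, Finset.mul_sum,
    Finset.sum_mul, mul_assoc]

end Flux

section TwoScaleExpansion

variable {d : ℕ}

theorem MemA.continuous {lam M : ℝ} {A : EuclideanSpace ℝ (Fin d) → Matrix (Fin d) (Fin d) ℝ}
    (hA : MemA d lam M A) : Continuous A := by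
  refine continuous_matrix fun i j ↦ (LipschitzWith.of_dist_le' (K := M) fun x y ↦ ?_).continuous
  rw [dist_eq_norm x y]
  exact hA.lipschitz x y i j

theorem bform_gradient_twoScale_error {A Ahat B : Matrix (Fin d) (Fin d) ℝ}
    {χ : Fin d → EuclideanSpace ℝ (Fin d) → ℝ} {v u : EuclideanSpace ℝ (Fin d) → ℝ} {ε : ℝ}
    (hε : ε ≠ 0) {x : EuclideanSpace ℝ (Fin d)}
    (hB : ∀ i j, B i j = A i j + (∑ k, A i k * gradient (χ j) (ε⁻¹ • x) k) - Ahat i j)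
    (hv : DifferentiableAt ℝ v x) (hu : DifferentiableAt ℝ u x)
    (hχ : ∀ j, DifferentiableAt ℝ (χ j) (ε⁻¹ • x))
    (hdu : ∀ j, DifferentiableAt ℝ (fun y ↦ gradient u y j) x) (η : EuclideanSpace ℝ (Fin d)) :
    bform A (gradient (fun y ↦ v y - u y - ε * ∑ j, χ j (ε⁻¹ • y) * gradient u y j) x) η =
      bform A (gradient v x) η - bform Ahat (gradient u x) η - bform B (gradient u x) η -
        ε * ∑ j, χ j (ε⁻¹ • x) * bform A (gradient (fun y ↦ gradient u y j) x) η := by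
  rw [gradient_twoScale_error hε hv hu hχ hdu, bform_flux_defect hB]
  simp only [bform_sub_left, bform_smul_left, bform_sum_left]
  ring

theorem continuous_flux_defect {A B : EuclideanSpace ℝ (Fin d) → Matrix (Fin d) (Fin d) ℝ}
    {Ahat : Matrix (Fin d) (Fin d) ℝ} {χ : Fin d → EuclideanSpace ℝ (Fin d) → ℝ}
    (hA : Continuous A) (hχ : ∀ j, ContDiff ℝ 1 (χ j))
    (hB : ∀ y i j, B y i j = A y i j + (∑ k, A y i k * gradient (χ j) y k) - Ahat i j) :
    Continuous B := by
  refine continuous_matrix fun i j ↦ ?_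
  simp only [hB]
  exact ((hA.matrix_elem i j).add (continuous_finsetSum _ fun k _ ↦ (hA.matrix_elem i k).mul
    (contDiff_gradient_apply (m := 0) (hχ j) (zero_add 1).le k).continuous)).sub continuous_const

theorem setIntegral_bform_gradient_twoScale_error
    {A B : EuclideanSpace ℝ (Fin d) → Matrix (Fin d) (Fin d) ℝ} (hA : Continuous A)
    {χ : Fin d → EuclideanSpace ℝ (Fin d) → ℝ} (hχ : ∀ j, ContDiff ℝ 1 (χ j))
    {Ahat : Matrix (Fin d) (Fin d) ℝ}
    (hB : ∀ y i j, B y i j = A y i j + (∑ k, A y i k * gradient (χ j) y k) - Ahat i j)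
    {Ω : Set (EuclideanSpace ℝ (Fin d))} (hΩ : IsOpen Ω) {ε : ℝ} (hε : ε ≠ 0)
    {v u : EuclideanSpace ℝ (Fin d) → ℝ} (hv : ContDiffOn ℝ 1 v Ω) (hu : ContDiffOn ℝ 2 u Ω)
    {ψ : EuclideanSpace ℝ (Fin d) → ℝ} (hψ : ContDiff ℝ 1 ψ) (hψs : HasCompactSupport ψ)
    (hψΩ : tsupport ψ ⊆ Ω) :
    ∫ x in Ω, bform (A (ε⁻¹ • x))
        (gradient (fun y ↦ v y - u y - ε * ∑ j, χ j (ε⁻¹ • y) * gradient u y j) x)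
        (gradient ψ x) =
      (∫ x in Ω, bform (A (ε⁻¹ • x)) (gradient v x) (gradient ψ x)) -
        (∫ x in Ω, bform Ahat (gradient u x) (gradient ψ x)) -
        (∫ x in Ω, bform (B (ε⁻¹ • x)) (gradient u x) (gradient ψ x)) -
        ε * ∫ x in Ω, ∑ j, χ j (ε⁻¹ • x) *
          bform (A (ε⁻¹ • x)) (gradient (fun y ↦ gradient u y j) x) (gradient ψ x) := by
  have rescale : Continuous fun x : EuclideanSpace ℝ (Fin d) ↦ ε⁻¹ • x := continuous_const_smul _
  have hu₁ : ContDiffOn ℝ 1 u Ω := hu.of_le one_le_two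
  have hdu (j : Fin d) : ContDiffOn ℝ 1 (fun y ↦ gradient u y j) Ω :=
    contDiffOn_gradient_apply hΩ hu one_add_one_eq_two.le j
  have differentiableAt {f : EuclideanSpace ℝ (Fin d) → ℝ} (hf : ContDiffOn ℝ 1 f Ω)
      {x : EuclideanSpace ℝ (Fin d)} (hx : x ∈ Ω) : DifferentiableAt ℝ f x :=
    (hf.differentiableOn one_ne_zero).differentiableAt (hΩ.mem_nhds hx)
  have integrable_bform {C : EuclideanSpace ℝ (Fin d) → Matrix (Fin d) (Fin d) ℝ}
      {ξ : EuclideanSpace ℝ (Fin d) → EuclideanSpace ℝ (Fin d)} (hC : Continuous C)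
      (hξ : ContinuousOn ξ Ω) : IntegrableOn (fun x ↦ bform (C x) (ξ x) (gradient ψ x)) Ω :=
    integrableOn_bform_gradient hΩ.measurableSet hC.continuousOn hξ hψ hψs hψΩ
  have integrable_v := integrable_bform (hA.comp' rescale) (continuousOn_gradient hΩ hv)
  have integrable_u := integrable_bform (continuous_const (y := Ahat))
    (continuousOn_gradient hΩ hu₁)
  have integrable_defect := integrable_bform ((continuous_flux_defect hA hχ hB).comp' rescale)
    (continuousOn_gradient hΩ hu₁)
  have integrable_corrector : IntegrableOn (fun x ↦ ∑ j, χ j (ε⁻¹ • x) *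
      bform (A (ε⁻¹ • x)) (gradient (fun y ↦ gradient u y j) x) (gradient ψ x)) Ω := by
    simp only [← bform_smul_left]
    exact integrable_finsetSum _ fun j _ ↦ integrable_bform (hA.comp' rescale)
      (((hχ j).continuous.comp rescale).continuousOn.smul (continuousOn_gradient hΩ (hdu j)))
  rw [setIntegral_congr_fun hΩ.measurableSet fun x hx ↦ bform_gradient_twoScale_error hε
      (hB (ε⁻¹ • x)) (differentiableAt hv hx) (differentiableAt hu₁ hx)
      (fun j ↦ (hχ j).differentiable one_ne_zero _) (fun j ↦ differentiableAt (hdu j) hx) _,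
    integral_sub ((integrable_v.fun_sub integrable_u).fun_sub integrable_defect)
      (integrable_corrector.const_mul ε),
    integral_sub (integrable_v.fun_sub integrable_u) integrable_defect,
    integral_sub integrable_v integrable_u, integral_const_mul]

theorem homogenization_error_identity_general
    {A : EuclideanSpace ℝ (Fin d) → Matrix (Fin d) (Fin d) ℝ} (hA : Continuous A)
    {χ : Fin d → EuclideanSpace ℝ (Fin d) → ℝ} (hχ : ∀ j, ContDiff ℝ 1 (χ j))
    {Ahat : Matrix (Fin d) (Fin d) ℝ} {b : Fin d → Fin d → EuclideanSpace ℝ (Fin d) → ℝ}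
    (hb : ∀ i j y, b i j y = A y i j + (∑ k, A y i k * gradient (χ j) y k) - Ahat i j)
    {φ : Fin d → Fin d → Fin d → EuclideanSpace ℝ (Fin d) → ℝ}
    (hφcont : ∀ k i j, Continuous (φ k i j)) (hφanti : ∀ k i j y, φ k i j y = -φ i k j y)
    (hφdiv : ∀ i j, HasWeakDiv volume (fun y ↦ WithLp.toLp 2 fun k ↦ φ k i j y) (b i j))
    {Ω : Set (EuclideanSpace ℝ (Fin d))} (hΩ : IsOpen Ω) {ε : ℝ} (hε : ε ≠ 0)
    {uε u₀ : EuclideanSpace ℝ (Fin d) → ℝ} (huε : ContDiffOn ℝ 1 uε Ω) (hu₀ : ContDiffOn ℝ 2 u₀ Ω)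
    {ψ : EuclideanSpace ℝ (Fin d) → ℝ} (hψ : ContDiff ℝ 2 ψ) (hψs : HasCompactSupport ψ)
    (hψΩ : tsupport ψ ⊆ Ω)
    (heq : ∫ x in Ω, bform (A (ε⁻¹ • x)) (gradient uε x) (gradient ψ x) =
      ∫ x in Ω, bform Ahat (gradient u₀ x) (gradient ψ x)) :
    ∫ x in Ω, bform (A (ε⁻¹ • x))
        (gradient (fun y ↦ uε y - u₀ y - ε * ∑ j, χ j (ε⁻¹ • y) * gradient u₀ y j) x)
        (gradient ψ x) =
      ε * (∫ x in Ω, ∑ i, ∑ j, ∑ k,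
          φ k i j (ε⁻¹ • x) * gradient (fun y ↦ gradient u₀ y j) x k * gradient ψ x i)
      - ε * ∫ x in Ω, ∑ j, χ j (ε⁻¹ • x) *
          bform (A (ε⁻¹ • x)) (gradient (fun y ↦ gradient u₀ y j) x) (gradient ψ x) := by
  let B (y : EuclideanSpace ℝ (Fin d)) : Matrix (Fin d) (Fin d) ℝ := .of fun i j ↦ b i j y
  have hB (y : EuclideanSpace ℝ (Fin d)) (i j : Fin d) : B y i j =
      A y i j + (∑ k, A y i k * gradient (χ j) y k) - Ahat i j := hb i j y
  have hb_cont (i j : Fin d) : Continuous (b i j) :=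
    (continuous_flux_defect hA hχ hB).matrix_elem i j
  have defect_integral := setIntegral_bform_rescaled_flux hb_cont hφcont hφanti hφdiv hε hΩ
    (contDiffOn_gradient_apply hΩ hu₀ one_add_one_eq_two.le) hψ hψs hψΩ
  rw [setIntegral_bform_gradient_twoScale_error hA hχ hB hΩ hε huε hu₀ (hψ.of_le one_le_two) hψs
    hψΩ, heq, defect_integral]
  ring

end TwoScaleExpansion

/-- **Lemma 2.2.** The identity satisfied by `w = u_ε - u₀ - ε χ_j(x/ε) ∂_j u₀`
when `ℒ_ε u_ε = ℒ_0 u₀` in `Ω`, tested against any test function `ψ`. -/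
theorem homogenization_error_identity
    (d : ℕ) (hd : 2 ≤ d) (lam M : ℝ) (hlam0 : 0 < lam) (hlam1 : lam ≤ 1) (hM : 0 < M)
    (A : EuclideanSpace ℝ (Fin d) → Matrix (Fin d) (Fin d) ℝ) (hA : MemA d lam M A)
    (χ : Fin d → EuclideanSpace ℝ (Fin d) → ℝ) (hχ : IsCorrector A χ)
    (Ahat : Matrix (Fin d) (Fin d) ℝ) (hAhat : Ahat = homMatrix A χ)
    (b : Fin d → Fin d → EuclideanSpace ℝ (Fin d) → ℝ)
    (hb : ∀ i j y, b i j y = A y i j + (∑ k, A y i k * gradient (χ j) y k) - Ahat i j)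
    (φ : Fin d → Fin d → Fin d → EuclideanSpace ℝ (Fin d) → ℝ)
    (hφcont : ∀ k i j, Continuous (φ k i j))
    (hφbd : ∀ k i j, ∃ K : ℝ, ∀ y, |φ k i j y| ≤ K)
    (hφper : ∀ k i j (y : EuclideanSpace ℝ (Fin d)) (z : Fin d → ℤ), φ k i j (y + perPt z) = φ k i j y)
    (hφanti : ∀ k i j y, φ k i j y = -φ i k j y)
    (hφdiv : ∀ i j, ∀ ψ : EuclideanSpace ℝ (Fin d) → ℝ, ContDiff ℝ (⊤ : ℕ∞) ψ → HasCompactSupport ψ →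
      (∫ y, b i j y * ψ y) = -∑ k, ∫ y, φ k i j y * gradient ψ y k)
    (Ω : Set (EuclideanSpace ℝ (Fin d))) (hΩ : IsOpen Ω) (ε : ℝ) (hε : 0 < ε)
    (uε u₀ : EuclideanSpace ℝ (Fin d) → ℝ) (huε : ContDiffOn ℝ 1 uε Ω) (hu₀ : ContDiffOn ℝ 2 u₀ Ω)
    (heq : ∀ ψ : EuclideanSpace ℝ (Fin d) → ℝ, ContDiff ℝ (⊤ : ℕ∞) ψ → HasCompactSupport ψ → tsupport ψ ⊆ Ω →
      (∫ x in Ω, bform (A (ε⁻¹ • x)) (gradient uε x) (gradient ψ x)) =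
        ∫ x in Ω, bform Ahat (gradient u₀ x) (gradient ψ x)) :
    ∀ ψ : EuclideanSpace ℝ (Fin d) → ℝ, ContDiff ℝ (⊤ : ℕ∞) ψ → HasCompactSupport ψ → tsupport ψ ⊆ Ω →
      (∫ x in Ω, bform (A (ε⁻¹ • x))
          (gradient (fun y => uε y - u₀ y - ε * ∑ j, χ j (ε⁻¹ • y) * gradient u₀ y j) x)
          (gradient ψ x)) =
        ε * (∫ x in Ω, ∑ i, ∑ j, ∑ k,
            φ k i j (ε⁻¹ • x) * gradient (fun y => gradient u₀ y j) x k * gradient ψ x i)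
        - ε * ∫ x in Ω, ∑ j, χ j (ε⁻¹ • x) *
            bform (A (ε⁻¹ • x)) (gradient (fun y => gradient u₀ y j) x) (gradient ψ x) := by
  exact fun ψ hψ hψs hψΩ ↦ homogenization_error_identity_general hA.continuous (fun j ↦ (hχ j).1) hb
    hφcont hφanti (fun i j ↦ hasWeakDiv_toLp (fun k ↦ hφcont k i j) (hφdiv i j)) hΩ hε.ne' huε hu₀
    (hψ.of_le (by norm_cast)) hψs hψΩ (heq ψ hψ hψs hψΩ)

end
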